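/- Let m, n be positive integers and A ∈ M_{n,m}(𝔽_q((z⁻¹))) be non-degenerate. Then the set Bad(A) has Hausdorff dimension n. -/

import Mathlib

/-!
Common setup: the field `𝔽_q((z⁻¹))` of formal power series over a finite field `K` of
cardinality `q`, modeled as the field `FF K` of formal Laurent series in `t = z⁻¹`,
together with its non-Archimedean norm, the embedding of the polynomial ring `𝔽_q[z]`,
distances to polynomial (vectors), Diophantine exponents, `Bad` sets, continued fractions
and best approximation sequences.
-/

open scoped Classical ENNReal NNReal
open Filter

noncomputable section

namespace FPSDA

variable (K : Type*) [Field K] [Fintype K]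

/-- The field `𝔽_q((z⁻¹))` of formal power series in `z⁻¹` over the finite field `K = 𝔽_q`,
modeled as the field of formal Laurent series in the variable `t = z⁻¹`. -/
def FF : Type _ := LaurentSeries K

instance : Field (FF K) := inferInstanceAs (Field (LaurentSeries K))

variable {K}

/-- The identity map, viewing an element of `𝔽_q((z⁻¹))` as a Laurent series in `t = z⁻¹`. -/
def toL (x : FF K) : LaurentSeries K := x

@[simp] lemma toL_zero : toL (0 : FF K) = 0 := rfl
@[simp] lemma toL_add (x y : FF K) : toL (x + y) = toL x + toL y := rfl
@[simp] lemma toL_neg (x : FF K) : toL (-x) = -toL x := rfl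
@[simp] lemma toL_sub (x y : FF K) : toL (x - y) = toL x - toL y := rfl
lemma toL_eq_zero {x : FF K} : toL x = 0 ↔ x = 0 := Iff.rfl

/-- The norm `‖x‖ = q ^ (deg x)` on `𝔽_q((z⁻¹))`, where
`deg x = - (order of x as a Laurent series in z⁻¹)`; `‖0‖ = 0`. -/
def fnorm (x : FF K) : ℝ :=
  if toL x = 0 then 0 else (Fintype.card K : ℝ) ^ (-(toL x).order)

lemma one_le_q : (1 : ℝ) ≤ (Fintype.card K : ℝ) := by
  exact_mod_cast Fintype.card_pos

lemma fnorm_nonneg (x : FF K) : 0 ≤ fnorm x := by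
  unfold fnorm
  split_ifs
  · exact le_refl 0
  · exact zpow_nonneg (by positivity) _

lemma fnorm_eq_zero {x : FF K} : fnorm x = 0 ↔ x = 0 := by
  unfold fnorm
  split_ifs with h
  · exact ⟨fun _ => toL_eq_zero.mp h, fun _ => rfl⟩
  · constructor
    · intro hc
      exact absurd hc (zpow_ne_zero _ (by
        have h0 : (0:ℝ) < (Fintype.card K : ℝ) := by positivity
        exact ne_of_gt h0))
    · intro hc
      exact absurd (toL_eq_zero.mpr hc) h

lemma fnorm_neg (x : FF K) : fnorm (-x) = fnorm x := by
  unfold fnorm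
  rw [toL_neg]
  simp [neg_eq_zero, HahnSeries.order_neg]

lemma fnorm_add_le (x y : FF K) : fnorm (x + y) ≤ max (fnorm x) (fnorm y) := by
  by_cases hxy : x + y = 0
  · rw [fnorm_eq_zero.mpr hxy]
    exact le_max_of_le_left (fnorm_nonneg x)
  by_cases hx : x = 0
  · rw [hx, zero_add]
    exact le_max_right _ _
  by_cases hy : y = 0
  · rw [hy, add_zero]
    exact le_max_left _ _
  have horder : min (toL x).order (toL y).order ≤ (toL (x + y)).order := by
    rw [toL_add]
    exact HahnSeries.min_order_le_order_add (show toL x + toL y ≠ 0 from hxy)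
  have h1 : fnorm (x + y) = (Fintype.card K : ℝ) ^ (-(toL (x+y)).order) := by
    unfold fnorm
    rw [if_neg (show toL (x + y) ≠ 0 from hxy)]
  rcases le_total (toL x).order (toL y).order with h | h
  · have h2 : (toL x).order ≤ (toL (x+y)).order := le_trans (by simp [min_eq_left h]) horder
    refine le_max_of_le_left ?_
    rw [h1]
    unfold fnorm
    rw [if_neg (show toL x ≠ 0 from hx)]
    exact zpow_le_zpow_right₀ one_le_q (by omega)
  · have h2 : (toL y).order ≤ (toL (x+y)).order := le_trans (by simp [min_eq_right h]) horder
    refine le_max_of_le_right ?_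
    rw [h1]
    unfold fnorm
    rw [if_neg (show toL y ≠ 0 from hy)]
    exact zpow_le_zpow_right₀ one_le_q (by omega)

/-- The (ultra)metric `dist x y = ‖x - y‖` on `𝔽_q((z⁻¹))`. -/
instance : MetricSpace (FF K) where
  dist x y := fnorm (x - y)
  dist_self x := by
    show fnorm (x - x) = 0
    rw [sub_self]
    exact fnorm_eq_zero.mpr rfl
  dist_comm x y := by
    show fnorm (x - y) = fnorm (y - x)
    have h : x - y = -(y - x) := by ring
    rw [h, fnorm_neg]
  dist_triangle x y z := by
    show fnorm (x - z) ≤ fnorm (x - y) + fnorm (y - z)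
    have h : x - z = (x - y) + (y - z) := by ring
    calc fnorm (x - z) ≤ max (fnorm (x - y)) (fnorm (y - z)) := by
          rw [h]; exact fnorm_add_le _ _
      _ ≤ fnorm (x - y) + fnorm (y - z) :=
        max_le (le_add_of_nonneg_right (fnorm_nonneg _)) (le_add_of_nonneg_left (fnorm_nonneg _))
  eq_of_dist_eq_zero := by
    intro x y h
    have h' : x - y = 0 := fnorm_eq_zero.mp h
    exact sub_eq_zero.mp h'

instance : MeasurableSpace (FF K) := borel _
instance : BorelSpace (FF K) := ⟨rfl⟩

/-- The canonical embedding of the polynomial ring `𝔽_q[z]` into `𝔽_q((z⁻¹))`: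
the variable `z` is sent to `t⁻¹ = single (-1) 1`. -/
def polyF (P : Polynomial K) : FF K :=
  Polynomial.aeval (HahnSeries.single (-1 : ℤ) (1 : K)) P

/-- Supremum norm of a vector with entries in `𝔽_q((z⁻¹))`. -/
def vnorm {ι : Type*} [Fintype ι] (v : ι → FF K) : ℝ := ⨆ i, fnorm (v i)

/-- `⟨v⟩`, the distance from the vector `v` to the nearest polynomial vector. -/
def vdist {ι : Type*} [Fintype ι] (v : ι → FF K) : ℝ :=
  ⨅ y : ι → Polynomial K, vnorm (fun i => v i - polyF (y i))

/-- `⟨x⟩`, the distance from the scalar `x` to the nearest polynomial. -/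
def sdist (x : FF K) : ℝ := ⨅ y : Polynomial K, fnorm (x - polyF y)

/-- The fractional part `{x} = Σ_{i ≥ 1} a_i z^{-i}` of `x = Σ_i a_i z^{-i}`. -/
def fracPart (x : FF K) : FF K :=
  (⟨fun i => if 1 ≤ i then (toL x).coeff i else 0, (toL x).isPWO_support'.mono (by
      intro i hi
      by_cases h : (1:ℤ) ≤ i
      · simpa [Function.mem_support, h] using hi
      · simp [Function.mem_support, h] at hi)⟩ : LaurentSeries K)

/-- The integer part `[x] = Σ_{i ≤ 0} a_i z^{-i}` of `x = Σ_i a_i z^{-i}`, as a polynomial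
in `z`. -/
def intPoly (x : FF K) : Polynomial K :=
  ∑ i ∈ Finset.range ((-(toL x).order).toNat + 1),
    Polynomial.monomial i ((toL x).coeff (-(i : ℤ)))

/-- `x ∈ 𝔽_q((z⁻¹))` is irrational if it is not in `𝔽_q(z)`, i.e. is not a ratio of two
polynomials in `z`. -/
def FIrrational (x : FF K) : Prop :=
  ∀ P Q : Polynomial K, Q ≠ 0 → x * polyF Q ≠ polyF P

section Exponents

variable {m n : ℕ}

/-- The norm `‖x‖ = max_j ‖x_j‖` of a polynomial vector `x`. -/
def pnorm {ι : Type*} [Fintype ι] (x : ι → Polynomial K) : ℝ :=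
  vnorm (fun i => (polyF (x i) : FF K))

/-- The system `⟨A x - θ⟩ ≤ H^{-ω}`, `‖x‖ ≤ H` has a polynomial solution `x`. -/
def Solv (A : Matrix (Fin n) (Fin m) (FF K)) (θ : Fin n → FF K) (ω H : ℝ) : Prop :=
  ∃ x : Fin m → Polynomial K,
    vdist (A.mulVec (fun j => polyF (x j)) - θ) ≤ H ^ (-ω) ∧ pnorm x ≤ H

/-- The system `⟨A x⟩ ≤ H^{-ω}`, `‖x‖ ≤ H` has a nonzero polynomial solution `x`. -/
def SolvHom (A : Matrix (Fin n) (Fin m) (FF K)) (ω H : ℝ) : Prop :=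
  ∃ x : Fin m → Polynomial K, x ≠ 0 ∧
    vdist (A.mulVec (fun j => polyF (x j))) ≤ H ^ (-ω) ∧ pnorm x ≤ H

/-- The inhomogeneous exponent `ω(A, θ)`: the supremum (in `[0,∞]`) of all `ω` such that
for arbitrarily large `H` the system `⟨A x - θ⟩ ≤ H^{-ω}`, `‖x‖ ≤ H` has a polynomial
solution. -/
def omegaInhom (A : Matrix (Fin n) (Fin m) (FF K)) (θ : Fin n → FF K) : ℝ≥0∞ :=
  ⨆ (ω : ℝ) (_ : ∀ H₀ : ℝ, ∃ H : ℝ, H₀ ≤ H ∧ Solv A θ ω H), ENNReal.ofReal ω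

/-- The uniform inhomogeneous exponent `ω̂(A, θ)`: as `ω(A, θ)`, but with a solution for
all sufficiently large `H`. -/
def omegaHatInhom (A : Matrix (Fin n) (Fin m) (FF K)) (θ : Fin n → FF K) : ℝ≥0∞ :=
  ⨆ (ω : ℝ) (_ : ∃ H₀ : ℝ, ∀ H : ℝ, H₀ ≤ H → Solv A θ ω H), ENNReal.ofReal ω

/-- The homogeneous exponent `ω(A)`. -/
def omegaHom (A : Matrix (Fin n) (Fin m) (FF K)) : ℝ≥0∞ :=
  ⨆ (ω : ℝ) (_ : ∀ H₀ : ℝ, ∃ H : ℝ, H₀ ≤ H ∧ SolvHom A ω H), ENNReal.ofReal ω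

/-- The uniform homogeneous exponent `ω̂(A)`. -/
def omegaHatHom (A : Matrix (Fin n) (Fin m) (FF K)) : ℝ≥0∞ :=
  ⨆ (ω : ℝ) (_ : ∃ H₀ : ℝ, ∀ H : ℝ, H₀ ≤ H → SolvHom A ω H), ENNReal.ofReal ω

/-- `A` is non-degenerate: the `𝔽_q[z]`-module `Aᵀ 𝔽_q[z]ⁿ + 𝔽_q[z]^m ⊆ 𝔽_q((z⁻¹))^m` has
rank `m + n` over `𝔽_q[z]`, i.e. its `m + n` natural generators are linearly independent
over `𝔽_q[z]`; equivalently, no nonzero polynomial vector `u` makes `Aᵀ u` a polynomial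
vector. -/
def Nondegenerate (A : Matrix (Fin n) (Fin m) (FF K)) : Prop :=
  ∀ u : Fin n → Polynomial K,
    (∃ v : Fin m → Polynomial K,
      A.transpose.mulVec (fun i => polyF (u i)) = fun j => polyF (v j)) → u = 0

/-- `liminf_{x ∈ 𝔽_q[z]^m, ‖x‖ → ∞} ‖x‖^{m/n} ⟨A x - θ⟩`, computed in `[0, ∞]`. -/
def badLiminf (A : Matrix (Fin n) (Fin m) (FF K)) (θ : Fin n → FF K) : ℝ≥0∞ :=
  Filter.liminf
    (fun x : Fin m → Polynomial K =>
      ENNReal.ofReal ((pnorm x) ^ ((m : ℝ) / (n : ℝ)) *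
        vdist (A.mulVec (fun j => polyF (x j)) - θ)))
    (Filter.comap (fun x : Fin m → Polynomial K => pnorm x) Filter.atTop)

/-- The set `Bad^ε(A)` of `θ` in the unit polydisc `𝕀ⁿ` with
`liminf_{‖x‖ → ∞} ‖x‖^{m/n} ⟨A x - θ⟩ ≥ ε`. -/
def Bad (A : Matrix (Fin n) (Fin m) (FF K)) (ε : ℝ) : Set (Fin n → FF K) :=
  {θ | (∀ i, fnorm (θ i) < 1) ∧ ENNReal.ofReal ε ≤ badLiminf A θ}

/-- The set `Bad(A) = ⋃_{ε > 0} Bad^ε(A)`. -/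
def BadAll (A : Matrix (Fin n) (Fin m) (FF K)) : Set (Fin n → FF K) :=
  ⋃ (ε : ℝ) (_ : 0 < ε), Bad A ε

/-- `M(y) = ⟨Aᵀ y⟩` for a polynomial vector `y`. -/
def Mfun (A : Matrix (Fin n) (Fin m) (FF K)) (y : Fin n → Polynomial K) : ℝ :=
  vdist (A.transpose.mulVec (fun i => polyF (y i)))

/-- `y 1, y 2, …` is a sequence of best approximations related to `Aᵀ`:
`1 = Y_1 < Y_2 < ⋯`, `M_1 > M_2 > ⋯`, and `M(x) ≥ M_k` for every nonzero polynomial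
vector `x` with `‖x‖ < Y_{k+1}` (the value `y 0` is irrelevant). -/
def IsBestApproxSeq (A : Matrix (Fin n) (Fin m) (FF K))
    (y : ℕ → Fin n → Polynomial K) : Prop :=
  pnorm (y 1) = 1 ∧
  (∀ k, 1 ≤ k → pnorm (y k) < pnorm (y (k + 1))) ∧
  (∀ k, 1 ≤ k → Mfun A (y (k + 1)) < Mfun A (y k)) ∧
  (∀ k, 1 ≤ k → ∀ x : Fin n → Polynomial K, x ≠ 0 → pnorm x < pnorm (y (k + 1)) →
    Mfun A (y k) ≤ Mfun A x)

end Exponents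

section Scalar

/-- The system `⟨ξ x - θ⟩ ≤ H^{-ω}`, `‖x‖ ≤ H` has a polynomial solution `x`. -/
def sSolv (ξ θ : FF K) (ω H : ℝ) : Prop :=
  ∃ x : Polynomial K, sdist (ξ * polyF x - θ) ≤ H ^ (-ω) ∧ fnorm (polyF x) ≤ H

/-- The scalar inhomogeneous exponent `ω((ξ), θ)`. -/
def somegaInhom (ξ θ : FF K) : ℝ≥0∞ :=
  ⨆ (ω : ℝ) (_ : ∀ H₀ : ℝ, ∃ H : ℝ, H₀ ≤ H ∧ sSolv ξ θ ω H), ENNReal.ofReal ω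

/-- The scalar uniform inhomogeneous exponent `ω̂((ξ), θ)`. -/
def somegaHatInhom (ξ θ : FF K) : ℝ≥0∞ :=
  ⨆ (ω : ℝ) (_ : ∃ H₀ : ℝ, ∀ H : ℝ, H₀ ≤ H → sSolv ξ θ ω H), ENNReal.ofReal ω

/-- The scalar homogeneous exponent `ω((ξ))`. -/
def somegaHom (ξ : FF K) : ℝ≥0∞ :=
  ⨆ (ω : ℝ) (_ : ∀ H₀ : ℝ, ∃ H : ℝ, H₀ ≤ H ∧ ∃ x : Polynomial K, x ≠ 0 ∧
      sdist (ξ * polyF x) ≤ H ^ (-ω) ∧ fnorm (polyF x) ≤ H), ENNReal.ofReal ω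

/-- `liminf_{x ∈ 𝔽_q[z], ‖x‖ → ∞} ‖x‖ ⟨α x - θ⟩`, computed in `[0, ∞]`. -/
def sBadLiminf (α θ : FF K) : ℝ≥0∞ :=
  Filter.liminf
    (fun x : Polynomial K => ENNReal.ofReal (fnorm (polyF x) * sdist (α * polyF x - θ)))
    (Filter.comap (fun x : Polynomial K => fnorm (polyF x)) Filter.atTop)

/-- The set `Bad^ε(α)` of `θ ∈ 𝕀` with `liminf_{‖x‖ → ∞} ‖x‖ ⟨α x - θ⟩ ≥ ε`. -/
def sBad (α : FF K) (ε : ℝ) : Set (FF K) :=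
  {θ | fnorm θ < 1 ∧ ENNReal.ofReal ε ≤ sBadLiminf α θ}

end Scalar

section CF

/-- The Gauss map `T x = 1/x - [1/x]` on `𝔽_q((z⁻¹))`. -/
def gaussMap (x : FF K) : FF K := fracPart x⁻¹

/-- `pquot α k` is the `(k+1)`-st partial quotient `A_{k+1} = [1 / T^k α]` of the
continued fraction expansion of `α`. -/
def pquot (α : FF K) (k : ℕ) : Polynomial K := intPoly ((gaussMap^[k] α)⁻¹)

/-- `cfQ α k` is the denominator `Q_k` of the `k`-th convergent of the continued fraction
expansion of `α`: `Q_0 = 1`, `Q_1 = A_1`, `Q_{k+2} = A_{k+2} Q_{k+1} + Q_k`. -/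
def cfQ (α : FF K) : ℕ → Polynomial K
  | 0 => 1
  | 1 => pquot α 0
  | (k + 2) => pquot α (k + 1) * cfQ α (k + 1) + cfQ α k

/-- `α` is singular on average: for every `c > 0` the proportion of `l ∈ {1, …, N}` for
which `‖{Q α}‖ ≤ c 2^{-l}` has a solution `Q ∈ 𝔽_q[z]` with `0 < ‖Q‖ ≤ 2^l` tends to `1`
as `N → ∞`. -/
def SingularOnAverage (α : FF K) : Prop :=
  ∀ c : ℝ, 0 < c →
    Filter.Tendsto
      (fun N : ℕ =>
        (((Finset.Icc 1 N).filter (fun l : ℕ =>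
            ∃ Q : Polynomial K, Q ≠ 0 ∧ fnorm (polyF Q) ≤ 2 ^ l ∧
              fnorm (fracPart (polyF Q * α)) ≤ c / 2 ^ l)).card : ℝ) / (N : ℝ))
      Filter.atTop (nhds 1)

end CF

end FPSDA

open FPSDA MeasureTheory

/-!
Dirichlet's theorem gives, for every `x`, a nonzero `u` of controlled norm with `⟨Aᵀu⟩ < 1 / ‖x‖`
up to a constant. Expanding `u · θ = x · Aᵀu - u · (Ax - θ)` modulo polynomials, a lower bound for
`⟨u · θ⟩` becomes the lower bound for `⟨Ax - θ⟩` required of a badly approximable `θ`. Here `u` may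
be replaced by any vector of comparable norm with smaller `⟨Aᵀu⟩`, so one `w_b` for each shell
`‖u‖ ≈ q ^ (b N)` suffices: a minimizer of `⟨Aᵀu⟩`. Write `θ` in blocks of `N` digits. Once the
blocks of `θ` before the `b`-th are fixed, `⟨w_b · θ⟩ < q ^ (-2N)` determines one coordinate of the
`b`-th block from the others, so at least `q ^ (n N - 1)` of the `q ^ (n N)` blocks avoid it. The
surviving points contain a regular tree of dimension `n - 1 / N`, and `N` is arbitrary.
-/

namespace FPSDA

section Branching

variable {B D : Type*}

/-- The sequence obtained by choosing its terms one after another: given the terms before `b`, the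
rule `ι b` turns the label `d b` into the term at `b`. -/
def branch (ι : ∀ b, (Fin b → B) → D → B) (d : ℕ → D) (b : ℕ) : B :=
  ι b (fun k => branch ι d k) (d b)
termination_by b
decreasing_by exact k.isLt

lemma branch_congr (ι : ∀ b, (Fin b → B) → D → B) {d d' : ℕ → D} {b : ℕ}
    (h : ∀ k < b, d k = d' k) : ∀ k < b, branch ι d k = branch ι d' k := by
  intro k
  induction k using Nat.strong_induction_on with
  | _ k ih =>
    intro hk
    rw [branch, branch, h k hk]
    congr 1
    exact funext fun j => ih j j.isLt (j.isLt.trans hk)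

lemma exists_branching {P : ℕ → (ℕ → B) → Prop}
    (h : ∀ b (β : Fin b → B), ∃ ι : D ↪ B, ∀ c γ, (∀ k : Fin b, γ k = β k) → γ b = ι c → P b γ) :
    ∃ Φ : (ℕ → D) → ℕ → B, (∀ d b, P b (Φ d)) ∧
      ∀ d d' b, (∀ k < b, d k = d' k) → d b ≠ d' b → Φ d b ≠ Φ d' b := by
  choose ι hι using h
  refine ⟨branch fun b β => ι b β, fun d b => hι b _ (d b) _ (fun _ => rfl) (by rw [branch]),
    fun d d' b hprefix hne heq => hne ?_⟩
  rw [branch, branch, funext fun k : Fin b => branch_congr _ hprefix k k.isLt] at heq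
  exact (ι b _).injective heq

end Branching

section HausdorffDimension

lemma dimH_le_of_cover {X : Type*} [EMetricSpace X] {ι : ℕ → Type*} [∀ b, Fintype (ι b)]
    {s : Set X} {d C : ℝ≥0} {r : ℕ → ℝ≥0∞} (hr : Tendsto r atTop (nhds 0))
    {t : ∀ b, ι b → Set X} (ht : ∀ b i, Metric.ediam (t b i) ≤ r b) (hst : ∀ b, s ⊆ ⋃ i, t b i)
    (hC : ∀ b, (Fintype.card (ι b) : ℝ≥0∞) * r b ^ (d : ℝ) ≤ C) : dimH s ≤ d := by
  borelize X
  have hsum (b : ℕ) : ∑ i, Metric.ediam (t b i) ^ (d : ℝ) ≤ C := calc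
    ∑ i, Metric.ediam (t b i) ^ (d : ℝ) ≤ ∑ _i : ι b, r b ^ (d : ℝ) := by
      gcongr with i
      exact ht b i
    _ = Fintype.card (ι b) * r b ^ (d : ℝ) := by
      rw [Finset.sum_const, nsmul_eq_mul, Finset.card_univ]
    _ ≤ C := hC b
  have hmeasure : μH[(d : ℝ)] s ≤ C := calc
    μH[(d : ℝ)] s ≤ liminf (fun b => ∑ i, Metric.ediam (t b i) ^ (d : ℝ)) atTop :=
      Measure.hausdorffMeasure_le_liminf_sum d s r hr t (.of_forall ht) (.of_forall hst)
    _ ≤ liminf (fun _ : ℕ => (C : ℝ≥0∞)) atTop := liminf_le_liminf (.of_forall hsum)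
    _ = C := liminf_const _
  exact dimH_le_of_hausdorffMeasure_ne_top (hmeasure.trans_lt ENNReal.coe_lt_top).ne

lemma dimH_Icc_eq_one {a b : ℝ} (hab : a < b) : dimH (Set.Icc a b) = 1 := by
  have hint : (interior (Set.Icc a b)).Nonempty := by
    rw [interior_Icc]
    exact Set.nonempty_Ioo.mpr hab
  rw [Real.dimH_of_nonempty_interior hint, Module.finrank_self, Nat.cast_one]

/-- The inverse of `T` followed by the base-`M` expansion is a Hölder map onto `[0, 1]`. -/
lemma le_dimH_range {X : Type*} [MetricSpace X] {M : ℕ} (hM : 1 < M) {T : (ℕ → Fin M) → X}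
    {s C : ℝ≥0} (hT : ∀ d d' b, (∀ k < b, d k = d' k) → d b ≠ d' b →
      ((M : ℝ) ^ b)⁻¹ ≤ C * dist (T d) (T d') ^ (s : ℝ)) :
    (s : ℝ≥0∞) ≤ dimH (Set.range T) := by
  rcases eq_or_ne s 0 with rfl | hs
  · exact zero_le
  have hdist {d d' : ℕ → Fin M} (hne : d ≠ d') :
      ((M : ℝ) ^ PiNat.firstDiff d d')⁻¹ ≤ C * dist (T d) (T d') ^ (s : ℝ) :=
    hT d d' _ (fun _ hk => PiNat.apply_eq_of_lt_firstDiff hk) (PiNat.apply_firstDiff_ne hne)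
  have hinj : Function.Injective T := fun d d' heq => by
    by_contra hne
    have hle := hdist hne
    rw [heq, dist_self, Real.zero_rpow (NNReal.coe_ne_zero.mpr hs), mul_zero] at hle
    exact hle.not_gt (by positivity)
  let g : X → ℝ := Function.extend T Real.ofDigits 0
  have hg (d : ℕ → Fin M) : g (T d) = Real.ofDigits d := hinj.extend_apply _ _ d
  have hholder : HolderOnWith C s g (Set.range T) := by
    rintro _ ⟨d, rfl⟩ _ ⟨d', rfl⟩
    rcases eq_or_ne d d' with rfl | hne
    · rw [edist_self]
      exact zero_le
    rw [edist_dist, edist_dist, ENNReal.ofReal_rpow_of_nonneg dist_nonneg (NNReal.coe_nonneg s),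
      ← ENNReal.ofReal_coe_nnreal, ← ENNReal.ofReal_mul (NNReal.coe_nonneg C), hg, hg]
    refine ENNReal.ofReal_le_ofReal (le_trans ?_ (hdist hne))
    rw [Real.dist_eq]
    exact Real.abs_ofDigits_sub_ofDigits_le fun _ hk => PiNat.apply_eq_of_lt_firstDiff hk
  have hsurj : Set.Icc (0 : ℝ) 1 ⊆ g '' Set.range T := fun x hx => by
    obtain ⟨d, -, hd⟩ := Real.ofDigits_SurjOn hM hx
    exact ⟨T d, ⟨d, rfl⟩, (hg d).trans hd⟩
  have hone : 1 ≤ dimH (Set.range T) / s := calc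
    1 = dimH (Set.Icc (0 : ℝ) 1) := (dimH_Icc_eq_one zero_lt_one).symm
    _ ≤ dimH (g '' Set.range T) := dimH_mono hsurj
    _ ≤ dimH (Set.range T) / s := hholder.dimH_image_le (pos_iff_ne_zero.mpr hs)
  rwa [ENNReal.le_div_iff_mul_le (.inl (ENNReal.coe_ne_zero.mpr hs)) (.inl ENNReal.coe_ne_top),
    one_mul] at hone

end HausdorffDimension

variable {K : Type*} [Field K]

section Coefficients

lemma polyF_zero : polyF (0 : Polynomial K) = 0 := map_zero _

lemma polyF_add (P Q : Polynomial K) : polyF (P + Q) = polyF P + polyF Q := map_add _ P Q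

lemma polyF_sub (P Q : Polynomial K) : polyF (P - Q) = polyF P - polyF Q := map_sub _ P Q

lemma polyF_mul (P Q : Polynomial K) : polyF (P * Q) = polyF P * polyF Q := map_mul _ P Q

lemma polyF_sum {ι : Type*} (s : Finset ι) (P : ι → Polynomial K) :
    polyF (∑ i ∈ s, P i) = ∑ i ∈ s, polyF (P i) :=
  map_sum (Polynomial.aeval (HahnSeries.single (-1 : ℤ) (1 : K))) P s

lemma polyF_monomial (k : ℕ) (a : K) :
    toL (polyF (Polynomial.monomial k a)) = HahnSeries.single (-(k : ℤ)) a := by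
  change Polynomial.aeval (HahnSeries.single (-1 : ℤ) (1 : K)) (Polynomial.monomial k a) = _
  have hC : algebraMap K (HahnSeries ℤ K) a = HahnSeries.single 0 a := by
    simp [HahnSeries.algebraMap_apply', HahnSeries.C_apply]
  rw [Polynomial.aeval_monomial, HahnSeries.single_pow, hC]
  simp [HahnSeries.single_mul_single]

lemma coeff_polyF (P : Polynomial K) (k : ℤ) :
    (toL (polyF P)).coeff k = if k ≤ 0 then P.coeff (-k).toNat else 0 := by
  induction P using Polynomial.induction_on' with
  | add P Q hP hQ =>
    rw [polyF_add]
    change (toL (polyF P)).coeff k + (toL (polyF Q)).coeff k = _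
    rw [hP, hQ]
    split_ifs <;> simp
  | monomial d a =>
    rw [polyF_monomial, HahnSeries.coeff_single, Polynomial.coeff_monomial]
    split_ifs <;> first | rfl | omega

lemma coeff_fracPart (x : FF K) (k : ℤ) :
    (toL (fracPart x)).coeff k = if 1 ≤ k then (toL x).coeff k else 0 := rfl

lemma coeff_intPoly (x : FF K) (k : ℕ) :
    (intPoly x).coeff k = (toL x).coeff (-(k : ℤ)) := by
  simp only [intPoly, Polynomial.finsetSum_coeff, Polynomial.coeff_monomial,
    Finset.sum_ite_eq', Finset.mem_range, ite_eq_left_iff, not_lt]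
  intro hk
  exact (HahnSeries.coeff_eq_zero_of_lt_order (by omega)).symm

lemma polyF_intPoly_add_fracPart (x : FF K) : polyF (intPoly x) + fracPart x = x := by
  refine HahnSeries.ext (funext fun k => ?_)
  change (toL (polyF (intPoly x))).coeff k + (toL (fracPart x)).coeff k = (toL x).coeff k
  rw [coeff_polyF, coeff_fracPart, coeff_intPoly]
  split_ifs with h h' h'
  · omega
  · rw [add_zero, Int.toNat_of_nonneg (by omega), neg_neg]
  · rw [zero_add]
  · omega

lemma sub_polyF_intPoly (x : FF K) : x - polyF (intPoly x) = fracPart x :=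
  sub_eq_of_eq_add' (polyF_intPoly_add_fracPart x).symm

end Coefficients

section DigitBlocks

variable {N : ℕ} [NeZero N]

/-- The element of the open unit ball whose digits, read in consecutive blocks of length `N`, are
`a 0, a 1, …`; digit `j` is the coefficient of `z ^ (-(j + 1))`. -/
def ofBlocks (a : ℕ → Fin N → K) : FF K :=
  HahnSeries.ofSuppBddBelow
    (fun k : ℤ => if 1 ≤ k then a ((k - 1).toNat / N) (Fin.ofNat N (k - 1).toNat) else 0)
    ⟨1, fun _ hk => by_contra fun h => hk (if_neg h)⟩

lemma coeff_ofBlocks_of_nonpos (a : ℕ → Fin N → K) {k : ℤ} (hk : k ≤ 0) :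
    (toL (ofBlocks a)).coeff k = 0 :=
  if_neg (by omega)

lemma coeff_ofBlocks (a : ℕ → Fin N → K) (b : ℕ) (r : Fin N) :
    (toL (ofBlocks a)).coeff (b * N + r + 1 : ℕ) = a b r := by
  refine (if_pos (by omega)).trans ?_
  have hidx : (((b * N + r + 1 : ℕ) : ℤ) - 1).toNat = r + N * b := by
    rw [mul_comm]
    omega
  rw [hidx, Nat.add_mul_div_left _ _ (NeZero.pos N), Nat.div_eq_of_lt r.isLt, zero_add]
  congr 1
  ext
  simp [Nat.mod_eq_of_lt r.isLt]

/-- The point of the unit polydisc whose coordinates have the digit blocks `γ 0, γ 1, …`. -/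
def blockPoint {n : ℕ} (γ : ℕ → Fin n → Fin N → K) : Fin n → FF K :=
  fun i => ofBlocks fun b => γ b i

end DigitBlocks

variable [Fintype K]

section Norm

lemma one_lt_q : (1 : ℝ) < (Fintype.card K : ℝ) := by
  exact_mod_cast Fintype.one_lt_card

lemma fnorm_zero : fnorm (0 : FF K) = 0 := fnorm_eq_zero.mpr rfl

lemma fnorm_of_ne_zero {x : FF K} (hx : x ≠ 0) :
    fnorm x = (Fintype.card K : ℝ) ^ (-(toL x).order) := if_neg hx

lemma fnorm_le_zpow_iff {x : FF K} {k : ℤ} :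
    fnorm x ≤ (Fintype.card K : ℝ) ^ (-k) ↔ ∀ i < k, (toL x).coeff i = 0 := by
  rcases eq_or_ne x 0 with rfl | hx
  · simp only [fnorm_zero, toL_zero, HahnSeries.coeff_zero, implies_true, iff_true]
    positivity
  · rw [fnorm_of_ne_zero hx, zpow_le_zpow_iff_right₀ one_lt_q, neg_le_neg_iff]
    exact HahnSeries.le_order_iff_forall hx

lemma fnorm_lt_zpow_iff {x : FF K} {k : ℤ} :
    fnorm x < (Fintype.card K : ℝ) ^ (-k) ↔ ∀ i ≤ k, (toL x).coeff i = 0 := by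
  simp only [← Int.lt_add_one_iff, ← fnorm_le_zpow_iff]
  rcases eq_or_ne x 0 with rfl | hx
  · simp only [fnorm_zero]
    exact iff_of_true (by positivity) (by positivity)
  · rw [fnorm_of_ne_zero hx, zpow_lt_zpow_iff_right₀ one_lt_q, zpow_le_zpow_iff_right₀ one_lt_q]
    omega

lemma fnorm_lt_one_iff {x : FF K} : fnorm x < 1 ↔ ∀ i ≤ 0, (toL x).coeff i = 0 := by
  simpa using fnorm_lt_zpow_iff (x := x) (k := 0)

lemma fnorm_mul (x y : FF K) : fnorm (x * y) = fnorm x * fnorm y := by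
  rcases eq_or_ne x 0 with rfl | hx
  · rw [zero_mul, fnorm_zero, zero_mul]
  rcases eq_or_ne y 0 with rfl | hy
  · rw [mul_zero, fnorm_zero, mul_zero]
  have horder : (toL (x * y)).order = (toL x).order + (toL y).order :=
    HahnSeries.order_mul (x := toL x) (y := toL y) hx hy
  rw [fnorm_of_ne_zero hx, fnorm_of_ne_zero hy, fnorm_of_ne_zero (mul_ne_zero hx hy), horder,
    neg_add, zpow_add₀ (by positivity)]

lemma isNonarchimedean_fnorm : IsNonarchimedean (fnorm : FF K → ℝ) := fnorm_add_le

lemma fnorm_sub_le (x y : FF K) : fnorm (x - y) ≤ max (fnorm x) (fnorm y) := by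
  simpa only [sub_eq_add_neg, fnorm_neg] using fnorm_add_le x (-y)

lemma fnorm_sum_le {ι : Type*} {s : Finset ι} {x : ι → FF K} {r : ℝ} (hr : 0 ≤ r)
    (h : ∀ i ∈ s, fnorm (x i) ≤ r) : fnorm (∑ i ∈ s, x i) ≤ r := by
  rcases s.eq_empty_or_nonempty with rfl | hs
  · rwa [Finset.sum_empty, fnorm_zero]
  · obtain ⟨i, hi, hle⟩ := isNonarchimedean_fnorm.finset_image_add_of_nonempty x hs
    exact hle.trans (h i hi)

variable {ι : Type*} [Fintype ι]

lemma fnorm_le_vnorm (v : ι → FF K) (i : ι) : fnorm (v i) ≤ vnorm v :=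
  le_ciSup (Set.finite_range fun i => fnorm (v i)).bddAbove i

lemma vnorm_nonneg (v : ι → FF K) : 0 ≤ vnorm v := Real.iSup_nonneg fun i => fnorm_nonneg (v i)

lemma vnorm_le_iff {v : ι → FF K} {r : ℝ} (hr : 0 ≤ r) :
    vnorm v ≤ r ↔ ∀ i, fnorm (v i) ≤ r :=
  ⟨fun h i => (fnorm_le_vnorm v i).trans h, fun h => Real.iSup_le h hr⟩

lemma fnorm_dotProduct_le (u v : ι → FF K) : fnorm (u ⬝ᵥ v) ≤ vnorm u * vnorm v :=
  fnorm_sum_le (mul_nonneg (vnorm_nonneg u) (vnorm_nonneg v)) fun i _ => by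
    rw [fnorm_mul]
    exact mul_le_mul (fnorm_le_vnorm u i) (fnorm_le_vnorm v i) (fnorm_nonneg _) (vnorm_nonneg u)

lemma fnorm_dotProduct_of_dominant {u v : ι → FF K} {i₀ : ι} (hu : fnorm (u i₀) = vnorm u)
    (hu₀ : 0 < vnorm u) (hv : ∀ i ≠ i₀, fnorm (v i) < fnorm (v i₀)) :
    fnorm (u ⬝ᵥ v) = vnorm u * fnorm (v i₀) := by
  rw [← hu, ← fnorm_mul]
  refine isNonarchimedean_fnorm.apply_sum_eq_of_lt (fun x => (fnorm_neg x).symm)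
    (Finset.mem_univ i₀) fun i _ hi => ?_
  rw [fnorm_mul, fnorm_mul, hu]
  exact mul_lt_mul_of_le_of_lt_of_nonneg_of_pos (fnorm_le_vnorm u i) (hv i hi) (fnorm_nonneg _) hu₀

end Norm

section PolynomialNorm

lemma fnorm_polyF {P : Polynomial K} (hP : P ≠ 0) :
    fnorm (polyF P) = (Fintype.card K : ℝ) ^ P.natDegree := by
  have hpow : (Fintype.card K : ℝ) ^ P.natDegree =
      (Fintype.card K : ℝ) ^ (-(-(P.natDegree : ℤ))) := by
    rw [neg_neg, zpow_natCast]
  rw [hpow]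
  refine le_antisymm (fnorm_le_zpow_iff.mpr fun i hi => ?_) (not_lt.mp fun hlt => hP ?_)
  · rw [coeff_polyF, if_pos (by omega), Polynomial.coeff_eq_zero_of_natDegree_lt (by omega)]
  · simpa [coeff_polyF] using fnorm_lt_zpow_iff.mp hlt _ le_rfl

lemma fnorm_polyF_le_pow_iff {P : Polynomial K} {D : ℕ} :
    fnorm (polyF P) ≤ (Fintype.card K : ℝ) ^ D ↔ P ∈ Polynomial.degreeLT K (D + 1) := by
  rw [Polynomial.mem_degreeLT]
  rcases eq_or_ne P 0 with rfl | hP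
  · rw [polyF_zero, fnorm_zero, Polynomial.degree_zero]
    exact iff_of_true (by positivity) (WithBot.bot_lt_coe _)
  · rw [fnorm_polyF hP, pow_le_pow_iff_right₀ one_lt_q,
      ← Polynomial.natDegree_lt_iff_degree_lt hP, Nat.lt_succ_iff]

lemma one_le_fnorm_polyF {P : Polynomial K} (hP : P ≠ 0) : 1 ≤ fnorm (polyF P) := by
  rw [fnorm_polyF hP]
  exact one_le_pow₀ one_le_q

variable {ι : Type*} [Fintype ι]

lemma pnorm_le_pow_iff {x : ι → Polynomial K} {D : ℕ} :
    pnorm x ≤ (Fintype.card K : ℝ) ^ D ↔ ∀ i, x i ∈ Polynomial.degreeLT K (D + 1) :=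
  (vnorm_le_iff (by positivity)).trans (forall_congr' fun _ => fnorm_polyF_le_pow_iff)

lemma exists_fnorm_polyF_eq_pnorm [Nonempty ι] (x : ι → Polynomial K) :
    ∃ i, fnorm (polyF (x i)) = pnorm x :=
  exists_eq_ciSup_of_finite

lemma exists_pnorm_eq_pow {x : ι → Polynomial K} (hx : x ≠ 0) :
    ∃ e : ℕ, pnorm x = (Fintype.card K : ℝ) ^ e := by
  obtain ⟨j, hj⟩ := Function.ne_iff.mp hx
  have : Nonempty ι := ⟨j⟩
  obtain ⟨i, hi⟩ := exists_fnorm_polyF_eq_pnorm x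
  refine ⟨(x i).natDegree, hi ▸ fnorm_polyF fun h0 => ?_⟩
  have hle : fnorm (polyF (x j)) ≤ pnorm x := fnorm_le_vnorm (fun i => polyF (x i)) j
  rw [← hi, h0, polyF_zero, fnorm_zero] at hle
  linarith [one_le_fnorm_polyF hj]

lemma pnorm_zero : pnorm (0 : ι → Polynomial K) = 0 := by
  simp [pnorm, vnorm, polyF_zero, fnorm_zero]

lemma finite_pnorm_le_pow (D : ℕ) :
    {x : ι → Polynomial K | pnorm x ≤ (Fintype.card K : ℝ) ^ D}.Finite := by
  have hfin : Finite (Polynomial.degreeLT K (D + 1)) :=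
    .of_equiv _ (Polynomial.degreeLTEquiv K (D + 1)).symm.toEquiv
  simp only [pnorm_le_pow_iff]
  exact Set.Finite.pi' fun _ : ι => hfin

end PolynomialNorm

section FractionalPart

lemma fnorm_fracPart_lt_one (x : FF K) : fnorm (fracPart x) < 1 := by
  refine fnorm_lt_one_iff.mpr fun i hi => ?_
  rw [coeff_fracPart, if_neg (by omega)]

lemma fnorm_fracPart_le (x : FF K) (P : Polynomial K) :
    fnorm (fracPart x) ≤ fnorm (x - polyF P) := by
  rcases eq_or_ne (intPoly x) P with rfl | hP
  · rw [sub_polyF_intPoly]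
  · have hsplit : polyF (intPoly x - P) = (x - polyF P) - fracPart x := by
      rw [polyF_sub]
      linear_combination -sub_polyF_intPoly x
    have hge := (one_le_fnorm_polyF (sub_ne_zero.mpr hP)).trans (hsplit ▸ fnorm_sub_le _ _)
    exact (fnorm_fracPart_lt_one x).le.trans
      ((le_max_iff.mp hge).resolve_right (fnorm_fracPart_lt_one x).not_ge)

lemma sdist_eq_fnorm_fracPart (x : FF K) : sdist x = fnorm (fracPart x) := by
  refine le_antisymm ?_ (le_ciInf (fnorm_fracPart_le x))
  refine (ciInf_le ⟨_, Set.forall_mem_range.mpr (fnorm_fracPart_le x)⟩ (intPoly x)).trans_eq ?_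
  rw [sub_polyF_intPoly]

lemma sdist_le_fnorm_sub (x : FF K) (P : Polynomial K) : sdist x ≤ fnorm (x - polyF P) :=
  sdist_eq_fnorm_fracPart x ▸ fnorm_fracPart_le x P

lemma sdist_le_zpow_iff {x : FF K} {k : ℤ} :
    sdist x ≤ (Fintype.card K : ℝ) ^ (-k) ↔ ∀ i, 1 ≤ i → i < k → (toL x).coeff i = 0 := by
  rw [sdist_eq_fnorm_fracPart, fnorm_le_zpow_iff]
  refine forall_congr' fun i => ?_
  rw [coeff_fracPart]
  by_cases hi : 1 ≤ i <;> simp [hi]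

lemma sdist_eq_fnorm_of_lt_one {x : FF K} (hx : fnorm x < 1) : sdist x = fnorm x := by
  rw [sdist_eq_fnorm_fracPart]
  congr 1
  refine HahnSeries.ext (funext fun k => (coeff_fracPart x k).trans (ite_eq_left_iff.mpr ?_))
  exact fun hk => (fnorm_lt_one_iff.mp hx k (by omega)).symm

lemma sdist_sub_le (x y : FF K) : sdist (x - y) ≤ max (sdist x) (sdist y) := by
  have hsplit : x - y - polyF (intPoly x - intPoly y) = fracPart x - fracPart y := by
    rw [polyF_sub]
    linear_combination sub_polyF_intPoly x - sub_polyF_intPoly y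
  rw [sdist_eq_fnorm_fracPart x, sdist_eq_fnorm_fracPart y]
  exact (hsplit ▸ sdist_le_fnorm_sub _ _).trans (fnorm_sub_le _ _)

variable {ι : Type*} [Fintype ι]

lemma vdist_eq_vnorm_fracPart (v : ι → FF K) : vdist v = vnorm fun i => fracPart (v i) := by
  have hle (y : ι → Polynomial K) :
      vnorm (fun i => fracPart (v i)) ≤ vnorm fun i => v i - polyF (y i) :=
    (vnorm_le_iff (vnorm_nonneg _)).mpr fun i =>
      (fnorm_fracPart_le _ (y i)).trans (fnorm_le_vnorm (fun i => v i - polyF (y i)) i)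
  refine le_antisymm ?_ (le_ciInf hle)
  refine (ciInf_le ⟨_, Set.forall_mem_range.mpr hle⟩ fun i => intPoly (v i)).trans_eq ?_
  simp only [sub_polyF_intPoly]

lemma vdist_nonneg (v : ι → FF K) : 0 ≤ vdist v := by
  rw [vdist_eq_vnorm_fracPart]
  exact vnorm_nonneg _

lemma vdist_le_iff {v : ι → FF K} {r : ℝ} (hr : 0 ≤ r) : vdist v ≤ r ↔ ∀ i, sdist (v i) ≤ r := by
  simp only [vdist_eq_vnorm_fracPart, vnorm_le_iff hr, sdist_eq_fnorm_fracPart]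

lemma sdist_dotProduct_le (P : ι → Polynomial K) (v : ι → FF K) :
    sdist ((fun i => polyF (P i)) ⬝ᵥ v) ≤ pnorm P * vdist v := by
  have hsplit : (fun i => polyF (P i)) ⬝ᵥ v - polyF (∑ i, P i * intPoly (v i)) =
      (fun i => polyF (P i)) ⬝ᵥ fun i => fracPart (v i) := by
    simp only [dotProduct, polyF_sum, polyF_mul, ← Finset.sum_sub_distrib, ← mul_sub,
      sub_polyF_intPoly]
  rw [vdist_eq_vnorm_fracPart]
  exact (hsplit ▸ sdist_le_fnorm_sub _ _).trans (fnorm_dotProduct_le _ _)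

end FractionalPart

section Transference

variable {m n : ℕ}

lemma Mfun_sub_le_zpow_iff (A : Matrix (Fin n) (Fin m) (FF K)) (u v : Fin n → Polynomial K)
    (k : ℤ) :
    Mfun A (u - v) ≤ (Fintype.card K : ℝ) ^ (-k) ↔ ∀ j i, 1 ≤ i → i < k →
      (toL (A.transpose.mulVec (fun i => polyF (u i)) j)).coeff i =
        (toL (A.transpose.mulVec (fun i => polyF (v i)) j)).coeff i := by
  have hsub : (fun i => polyF ((u - v) i)) = (fun i => polyF (u i)) - fun i => polyF (v i) :=
    funext fun i => polyF_sub (u i) (v i)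
  rw [Mfun, hsub, Matrix.mulVec_sub, vdist_le_iff (by positivity)]
  simp only [Pi.sub_apply, sdist_le_zpow_iff, toL_sub, HahnSeries.coeff_sub, sub_eq_zero]

lemma exists_pnorm_le_Mfun_le (A : Matrix (Fin n) (Fin m) (FF K)) {h D : ℕ}
    (hD : m * h < n * (D + 1)) :
    ∃ u ≠ 0, pnorm u ≤ (Fintype.card K : ℝ) ^ D ∧
      Mfun A u ≤ (Fintype.card K : ℝ) ^ (-(h + 1 : ℤ)) := by
  let vec (c : Fin n → Fin (D + 1) → K) (i : Fin n) : Polynomial K :=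
    (Polynomial.degreeLTEquiv K (D + 1)).symm (c i)
  let digits (c : Fin n → Fin (D + 1) → K) (j : Fin m) (l : Fin h) : K :=
    (toL (A.transpose.mulVec (fun i => polyF (vec c i)) j)).coeff (l + 1)
  have hcard : Fintype.card (Fin m → Fin h → K) < Fintype.card (Fin n → Fin (D + 1) → K) := by
    simpa [← pow_mul, mul_comm] using Nat.pow_lt_pow_right (Fintype.one_lt_card (α := K)) hD
  obtain ⟨c, c', hne, heq⟩ := Fintype.exists_ne_map_eq_of_card_lt digits hcard
  refine ⟨vec c - vec c', sub_ne_zero.mpr fun hvec => hne (funext fun i => ?_),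
    pnorm_le_pow_iff.mpr fun i => Submodule.sub_mem _ (Subtype.prop _) (Subtype.prop _),
    (Mfun_sub_le_zpow_iff A _ _ _).mpr fun j i hi hi' => ?_⟩
  · exact (Polynomial.degreeLTEquiv K (D + 1)).symm.injective (Subtype.ext (congrFun hvec i))
  · lift i to ℕ using by omega
    simpa [digits, show ((i - 1 : ℕ) : ℤ) + 1 = i by omega] using
      congrFun (congrFun heq j) ⟨i - 1, by omega⟩

lemma sdist_dotProduct_le_max (A : Matrix (Fin n) (Fin m) (FF K)) (θ : Fin n → FF K)
    (x : Fin m → Polynomial K) (w : Fin n → Polynomial K) :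
    sdist ((fun i => polyF (w i)) ⬝ᵥ θ) ≤
      max (pnorm x * Mfun A w) (pnorm w * vdist (A.mulVec (fun j => polyF (x j)) - θ)) := by
  have hsplit : (fun i => polyF (w i)) ⬝ᵥ θ =
      (fun j => polyF (x j)) ⬝ᵥ A.transpose.mulVec (fun i => polyF (w i)) -
        (fun i => polyF (w i)) ⬝ᵥ (A.mulVec (fun j => polyF (x j)) - θ) := by
    rw [dotProduct_sub, Matrix.dotProduct_mulVec _ A, Matrix.mulVec_transpose, sub_sub_eq_add_sub,
      dotProduct_comm (fun j => polyF (x j)), add_sub_cancel_left]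
  rw [hsplit]
  exact (sdist_sub_le _ _).trans (max_le_max (sdist_dotProduct_le _ _) (sdist_dotProduct_le _ _))

lemma exists_zpow_le_vdist (hn : 0 < n) {A : Matrix (Fin n) (Fin m) (FF K)} {θ : Fin n → FF K}
    {L N : ℕ}
    (h : ∀ u ≠ 0, ∃ w, Mfun A w ≤ Mfun A u ∧ pnorm w ≤ (Fintype.card K : ℝ) ^ N * pnorm u ∧
      (Fintype.card K : ℝ) ^ (-(L : ℤ)) ≤ sdist ((fun i => polyF (w i)) ⬝ᵥ θ))
    {x : Fin m → Polynomial K} {X : ℕ} (hx : pnorm x = (Fintype.card K : ℝ) ^ X) :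
    ∃ D : ℕ, n * D ≤ m * (X + L) ∧ (Fintype.card K : ℝ) ^ (-(L + N + D : ℤ)) ≤
      vdist (A.mulVec (fun j => polyF (x j)) - θ) := by
  set q : ℝ := (Fintype.card K : ℝ)
  have hq0 : q ≠ 0 := (zero_lt_one.trans one_lt_q).ne'
  set D := m * (X + L) / n
  refine ⟨D, Nat.mul_div_le _ _, ?_⟩
  obtain ⟨u, hu0, huD, hMu⟩ := exists_pnorm_le_Mfun_le A (Nat.lt_mul_div_succ (m * (X + L)) hn)
  obtain ⟨w, hMw, hwu, hwθ⟩ := h u hu0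
  have hsmall : pnorm x * Mfun A w < q ^ (-(L : ℤ)) := calc
    pnorm x * Mfun A w ≤ q ^ (X : ℤ) * q ^ (-((X + L : ℕ) + 1 : ℤ)) := by
      rw [hx, zpow_natCast]
      gcongr
      exact hMw.trans hMu
    _ < q ^ (-(L : ℤ)) := by
      rw [← zpow_add₀ hq0]
      exact zpow_lt_zpow_right₀ one_lt_q (by omega)
  have hlarge : q ^ (-(L : ℤ)) ≤ q ^ (N + D : ℤ) * vdist (A.mulVec (fun j => polyF (x j)) - θ) := by
    refine ((le_max_iff.mp (hwθ.trans (sdist_dotProduct_le_max A θ x w))).resolve_left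
      hsmall.not_ge).trans (mul_le_mul_of_nonneg_right ?_ (vdist_nonneg _))
    rw [zpow_add₀ hq0, zpow_natCast, zpow_natCast]
    exact hwu.trans (by gcongr)
  rwa [← mul_le_mul_iff_right₀ (by positivity : 0 < q ^ (N + D : ℤ)), ← zpow_add₀ hq0,
    show (N + D : ℤ) + -(L + N + D) = -L by ring]

lemma mem_Bad_of_forall_exists (hn : 0 < n) {A : Matrix (Fin n) (Fin m) (FF K)}
    {θ : Fin n → FF K} (hθ : ∀ i, fnorm (θ i) < 1) {L N : ℕ}
    (h : ∀ u ≠ 0, ∃ w, Mfun A w ≤ Mfun A u ∧ pnorm w ≤ (Fintype.card K : ℝ) ^ N * pnorm u ∧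
      (Fintype.card K : ℝ) ^ (-(L : ℤ)) ≤ sdist ((fun i => polyF (w i)) ⬝ᵥ θ)) :
    θ ∈ Bad A ((Fintype.card K : ℝ) ^ (-(L + N + m * L / n : ℝ))) := by
  set q : ℝ := (Fintype.card K : ℝ)
  have hq0 : 0 < q := zero_lt_one.trans one_lt_q
  refine ⟨hθ, Filter.le_liminf_of_le (by isBoundedDefault) ?_⟩
  filter_upwards [(eventually_ge_atTop (1 : ℝ)).comap _] with x hx
  have hx0 : x ≠ 0 := by
    rintro rfl
    exact zero_lt_one.not_ge (hx.trans_eq pnorm_zero)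
  obtain ⟨X, hX⟩ := exists_pnorm_eq_pow hx0
  obtain ⟨D, hD, hdist⟩ := exists_zpow_le_vdist hn h hX
  refine ENNReal.ofReal_le_ofReal ?_
  have hD' : (D : ℝ) ≤ m * (X + L) / n := by
    rw [le_div_iff₀ (by positivity), mul_comm]
    exact_mod_cast hD
  calc q ^ (-(L + N + m * L / n : ℝ))
      ≤ q ^ ((X : ℝ) * (m / n) + -(L + N + D)) := by
        refine Real.rpow_le_rpow_of_exponent_le one_lt_q.le ?_
        linear_combination hD'
    _ = pnorm x ^ (m / n : ℝ) * q ^ (-(L + N + D : ℤ)) := by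
        rw [Real.rpow_add hq0, Real.rpow_mul hq0.le, Real.rpow_natCast, hX, ← Real.rpow_intCast]
        push_cast
        rfl
    _ ≤ _ := by gcongr

end Transference

section Shell

variable {ι : Type*} [Fintype ι]

/-- The `b`-th shell of nonzero polynomial vectors, those with `q ^ ((b - 1) N) < ‖u‖ ≤ q ^ (b N)`.
The lower bound is multiplied through by `q ^ N`, which avoids negative exponents at `b = 0`. -/
def shell (N b : ℕ) : Set (ι → Polynomial K) :=
  {u | pnorm u ≤ (Fintype.card K : ℝ) ^ (b * N) ∧
    (Fintype.card K : ℝ) ^ (b * N) < (Fintype.card K : ℝ) ^ N * pnorm u}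

lemma pnorm_pos_of_mem_shell {N b : ℕ} {u : ι → Polynomial K} (hu : u ∈ shell N b) :
    0 < pnorm u :=
  pos_of_mul_pos_right ((by positivity : (0 : ℝ) < _).trans hu.2) (by positivity)

lemma finite_shell (N b : ℕ) : (shell N b : Set (ι → Polynomial K)).Finite :=
  (finite_pnorm_le_pow (b * N)).subset fun _ hu => hu.1

lemma shell_nonempty [Nonempty ι] {N : ℕ} (hN : 0 < N) (b : ℕ) :
    (shell N b : Set (ι → Polynomial K)).Nonempty := by
  have hnorm : pnorm (fun _ : ι => (Polynomial.X ^ (b * N) : Polynomial K)) =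
      (Fintype.card K : ℝ) ^ (b * N) := by
    rw [pnorm, vnorm, ciSup_const, fnorm_polyF (pow_ne_zero _ Polynomial.X_ne_zero),
      Polynomial.natDegree_X_pow]
  refine ⟨_, hnorm.le, ?_⟩
  rw [hnorm]
  exact lt_mul_of_one_lt_left (by positivity) (one_lt_pow₀ one_lt_q hN.ne')

lemma exists_mem_shell {N : ℕ} (hN : 0 < N) {u : ι → Polynomial K} (hu : u ≠ 0) :
    ∃ b, u ∈ shell N b := by
  obtain ⟨e, he⟩ := exists_pnorm_eq_pow hu
  refine ⟨(e + (N - 1)) / N, ?_, ?_⟩ <;> rw [he]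
  · refine pow_le_pow_right₀ one_le_q ?_
    have := Nat.lt_div_mul_add hN (a := e + (N - 1))
    omega
  · rw [← pow_add]
    refine pow_lt_pow_right₀ one_lt_q ?_
    have := Nat.div_mul_le_self (e + (N - 1)) N
    omega

variable {m n N : ℕ} {A : Matrix (Fin n) (Fin m) (FF K)}

lemma exists_Mfun_min_shell (hn : 0 < n) (hN : 0 < N) (A : Matrix (Fin n) (Fin m) (FF K)) (b : ℕ) :
    ∃ w ∈ shell N b, ∀ u ∈ shell N b, Mfun A w ≤ Mfun A u := by
  have : Nonempty (Fin n) := ⟨⟨0, hn⟩⟩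
  exact Set.exists_min_image _ _ (finite_shell N b) (shell_nonempty hN b)

lemma mem_Bad_of_Mfun_min_shell (hn : 0 < n) (hN : 0 < N) {W : ℕ → Fin n → Polynomial K}
    (hW : ∀ b, W b ∈ shell N b) (hmin : ∀ b, ∀ u ∈ shell N b, Mfun A (W b) ≤ Mfun A u)
    {θ : Fin n → FF K} (hθ : ∀ i, fnorm (θ i) < 1) {L : ℕ}
    (h : ∀ b, (Fintype.card K : ℝ) ^ (-(L : ℤ)) ≤ sdist ((fun i => polyF (W b i)) ⬝ᵥ θ)) :
    θ ∈ Bad A ((Fintype.card K : ℝ) ^ (-(L + N + m * L / n : ℝ))) := by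
  refine mem_Bad_of_forall_exists hn hθ fun u hu => ?_
  obtain ⟨b, hb⟩ := exists_mem_shell hN hu
  exact ⟨W b, hmin b u hb, (hW b).1.trans hb.2.le, h b⟩

end Shell

section BlockDistances

variable {n N : ℕ} [NeZero N]

lemma fnorm_ofBlocks_lt_one (a : ℕ → Fin N → K) : fnorm (ofBlocks a) < 1 :=
  fnorm_lt_one_iff.mpr fun _ hi => coeff_ofBlocks_of_nonpos a hi

lemma fnorm_ofBlocks_sub_lt {a a' : ℕ → Fin N → K} {b : ℕ} (h : ∀ k < b, a k = a' k) :
    fnorm (ofBlocks a - ofBlocks a') < (Fintype.card K : ℝ) ^ (-(b * N : ℤ)) := by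
  refine fnorm_lt_zpow_iff.mpr fun i hi => ?_
  rw [toL_sub, HahnSeries.coeff_sub, sub_eq_zero]
  rcases le_or_gt i 0 with hi0 | hi0
  · rw [coeff_ofBlocks_of_nonpos a hi0, coeff_ofBlocks_of_nonpos a' hi0]
  · obtain ⟨j, rfl⟩ : ∃ j : ℕ, i = (j + 1 : ℕ) := ⟨(i - 1).toNat, by omega⟩
    have hj : j / N < b := Nat.div_lt_of_lt_mul (by rw [mul_comm]; zify; omega)
    have hdigits := Nat.div_add_mod' j N
    have hcoeff (c : ℕ → Fin N → K) := coeff_ofBlocks c (j / N) ⟨j % N, Nat.mod_lt j (NeZero.pos N)⟩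
    simp only [hdigits] at hcoeff
    rw [hcoeff, hcoeff, h _ hj]

lemma le_fnorm_ofBlocks_sub {a a' : ℕ → Fin N → K} {b : ℕ} (h : a b ≠ a' b) :
    (Fintype.card K : ℝ) ^ (-((b + 1) * N : ℤ)) ≤ fnorm (ofBlocks a - ofBlocks a') := by
  obtain ⟨r, hr⟩ := Function.ne_iff.mp h
  refine not_lt.mp fun hlt => hr (sub_eq_zero.mp ?_)
  have hzero := fnorm_lt_zpow_iff.mp hlt (b * N + r + 1 : ℕ) (by
    have := r.isLt
    push_cast
    linarith)
  rwa [toL_sub, HahnSeries.coeff_sub, coeff_ofBlocks, coeff_ofBlocks] at hzero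

lemma le_dist_blockPoint {γ γ' : ℕ → Fin n → Fin N → K} {b : ℕ} (h : γ b ≠ γ' b) :
    (Fintype.card K : ℝ) ^ (-((b + 1) * N : ℤ)) ≤ dist (blockPoint γ) (blockPoint γ') := by
  obtain ⟨i, hi⟩ := Function.ne_iff.mp h
  exact (le_fnorm_ofBlocks_sub hi).trans (dist_le_pi_dist (blockPoint γ) (blockPoint γ') i)

lemma fnorm_blockPoint_sub_lt {b : ℕ} {γ γ' : ℕ → Fin n → Fin N → K}
    (hprefix : ∀ k < b, γ k = γ' k) {i i₀ : Fin n} (hi : γ b i = γ' b i) (hi₀ : γ b i₀ ≠ γ' b i₀) :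
    fnorm ((blockPoint γ - blockPoint γ') i) < fnorm ((blockPoint γ - blockPoint γ') i₀) := by
  have hagree (k : ℕ) (hk : k < b + 1) : γ k i = γ' k i := by
    rcases Nat.lt_succ_iff_lt_or_eq.mp hk with hk | rfl
    exacts [congrFun (hprefix k hk) i, hi]
  refine lt_of_lt_of_le ?_ (le_fnorm_ofBlocks_sub hi₀)
  exact_mod_cast fnorm_ofBlocks_sub_lt hagree

lemma le_sdist_dotProduct_blockPoint_sub {b : ℕ} {w : Fin n → Polynomial K} (hw : w ∈ shell N b)
    {i₀ : Fin n} (hwi₀ : fnorm (polyF (w i₀)) = pnorm w) {γ γ' : ℕ → Fin n → Fin N → K}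
    (hprefix : ∀ k < b, γ k = γ' k) (hblock : ∀ i ≠ i₀, γ b i = γ' b i)
    (hi₀ : γ b i₀ ≠ γ' b i₀) :
    (Fintype.card K : ℝ) ^ (-(2 * N : ℤ)) ≤
      sdist ((fun i => polyF (w i)) ⬝ᵥ (blockPoint γ - blockPoint γ')) := by
  set q : ℝ := (Fintype.card K : ℝ)
  have hq0 : q ≠ 0 := (zero_lt_one.trans one_lt_q).ne'
  set δ : Fin n → FF K := blockPoint γ - blockPoint γ'
  have hlower : q ^ (-((b + 1) * N : ℤ)) ≤ fnorm (δ i₀) := le_fnorm_ofBlocks_sub hi₀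
  have hupper : fnorm (δ i₀) < q ^ (-(b * N : ℤ)) :=
    fnorm_ofBlocks_sub_lt fun k hk => congrFun (hprefix k hk) i₀
  have hnorm : fnorm ((fun i => polyF (w i)) ⬝ᵥ δ) = pnorm w * fnorm (δ i₀) :=
    fnorm_dotProduct_of_dominant hwi₀ (pnorm_pos_of_mem_shell hw) fun i hi =>
      fnorm_blockPoint_sub_lt hprefix (hblock i hi) hi₀
  have hlt_one : fnorm ((fun i => polyF (w i)) ⬝ᵥ δ) < 1 := calc
    _ < q ^ (b * N : ℕ) * q ^ (-(b * N : ℤ)) := by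
      rw [hnorm]
      exact mul_lt_mul' hw.1 hupper (fnorm_nonneg _) (by positivity)
    _ = 1 := by
      rw [← zpow_natCast, ← zpow_add₀ hq0, Nat.cast_mul, add_neg_cancel, zpow_zero]
  rw [sdist_eq_fnorm_of_lt_one hlt_one, hnorm]
  calc q ^ (-(2 * N : ℤ)) = q ^ (-(N : ℤ)) * q ^ (b * N : ℕ) * q ^ (-((b + 1) * N : ℤ)) := by
        rw [← zpow_natCast, ← zpow_add₀ hq0, ← zpow_add₀ hq0]
        congr 1
        push_cast
        ring
    _ ≤ q ^ (-(N : ℤ)) * (q ^ N * pnorm w) * fnorm (δ i₀) := by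
        have := (pnorm_pos_of_mem_shell hw).le
        gcongr
        exact hw.2.le
    _ = pnorm w * fnorm (δ i₀) := by
        rw [zpow_neg, zpow_natCast, inv_mul_cancel_left₀ (by positivity)]

lemma eq_of_sdist_blockPoint_lt {b : ℕ} {w : Fin n → Polynomial K} (hw : w ∈ shell N b)
    {i₀ : Fin n} (hwi₀ : fnorm (polyF (w i₀)) = pnorm w) {γ γ' : ℕ → Fin n → Fin N → K}
    (hprefix : ∀ k < b, γ k = γ' k) (hblock : ∀ i ≠ i₀, γ b i = γ' b i)
    (hγ : sdist ((fun i => polyF (w i)) ⬝ᵥ blockPoint γ) < (Fintype.card K : ℝ) ^ (-(2 * N : ℤ)))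
    (hγ' : sdist ((fun i => polyF (w i)) ⬝ᵥ blockPoint γ') <
      (Fintype.card K : ℝ) ^ (-(2 * N : ℤ))) :
    γ b = γ' b := by
  suffices hi₀ : γ b i₀ = γ' b i₀ from
    funext fun i => (eq_or_ne i i₀).elim (fun h => h ▸ hi₀) (hblock i)
  by_contra hi₀
  refine (le_sdist_dotProduct_blockPoint_sub hw hwi₀ hprefix hblock hi₀).not_gt ?_
  rw [dotProduct_sub]
  exact (sdist_sub_le _ _).trans_lt (max_lt hγ hγ')

/-- The blocks `c` for which some `θ` whose digit blocks begin with `β` and then `c` has `w · θ`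
closer than `q ^ (-2N)` to a polynomial. -/
def badBlocks (w : Fin n → Polynomial K) {b : ℕ} (β : Fin b → Fin n → Fin N → K) :
    Set (Fin n → Fin N → K) :=
  {c | ∃ γ : ℕ → Fin n → Fin N → K, (∀ k : Fin b, γ k = β k) ∧ γ b = c ∧
    sdist ((fun i => polyF (w i)) ⬝ᵥ blockPoint γ) < (Fintype.card K : ℝ) ^ (-(2 * N : ℤ))}

lemma card_badBlocks_le (hn : 0 < n) {b : ℕ} {w : Fin n → Polynomial K} (hw : w ∈ shell N b)
    (β : Fin b → Fin n → Fin N → K) :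
    Nat.card (badBlocks w β) ≤ Fintype.card K ^ ((n - 1) * N) := by
  have : Nonempty (Fin n) := ⟨⟨0, hn⟩⟩
  obtain ⟨i₀, hi₀⟩ := exists_fnorm_polyF_eq_pnorm w
  have hcard : Nat.card ({i : Fin n // i ≠ i₀} → Fin N → K) = Fintype.card K ^ ((n - 1) * N) := by
    simp [← pow_mul, mul_comm]
  refine hcard ▸ Nat.card_le_card_of_injective (fun c i => c.1 i) ?_
  rintro ⟨_, γ, hγβ, rfl, hγ⟩ ⟨_, γ', hγβ', rfl, hγ'⟩ heq
  refine Subtype.ext (eq_of_sdist_blockPoint_lt hw hi₀ (fun k hk => ?_) (fun i hi => ?_) hγ hγ')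
  · exact (hγβ ⟨k, hk⟩).trans (hγβ' ⟨k, hk⟩).symm
  · exact congrFun heq ⟨i, hi⟩

lemma exists_embedding_le_sdist_blockPoint (hn : 0 < n) {b : ℕ} {w : Fin n → Polynomial K}
    (hw : w ∈ shell N b) (β : Fin b → Fin n → Fin N → K) :
    ∃ ι : Fin (Fintype.card K ^ (n * N - 1)) ↪ (Fin n → Fin N → K),
      ∀ c, ∀ γ : ℕ → Fin n → Fin N → K, (∀ k : Fin b, γ k = β k) → γ b = ι c →
        (Fintype.card K : ℝ) ^ (-(2 * N : ℤ)) ≤ sdist ((fun i => polyF (w i)) ⬝ᵥ blockPoint γ) := by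
  have hN : 0 < N := NeZero.pos N
  have hsplit : n * N = (n - 1) * N + N := by
    obtain ⟨n, rfl⟩ := Nat.exists_eq_succ_of_ne_zero hn.ne'
    exact Nat.succ_mul n N
  have hcard : Fintype.card (Fin (Fintype.card K ^ (n * N - 1))) ≤
      Fintype.card ((badBlocks w β)ᶜ : Set (Fin n → Fin N → K)) := by
    have hbad : Fintype.card (badBlocks w β) ≤ Fintype.card K ^ (n * N - 1) := by
      rw [← Nat.card_eq_fintype_card]
      refine (card_badBlocks_le hn hw β).trans ?_
      exact Nat.pow_le_pow_right Fintype.card_pos (by omega)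
    have hall : 2 * Fintype.card K ^ (n * N - 1) ≤ Fintype.card (Fin n → Fin N → K) := by
      have hexp : Fintype.card (Fin n → Fin N → K) =
          Fintype.card K * Fintype.card K ^ (n * N - 1) := by
        rw [mul_pow_sub_one (by positivity)]
        simp [← pow_mul, mul_comm]
      rw [hexp]
      exact Nat.mul_le_mul_right _ Fintype.one_lt_card
    rw [Fintype.card_fin, Fintype.card_compl_set]
    omega
  obtain ⟨ι⟩ := Function.Embedding.nonempty_of_card_le hcard
  refine ⟨ι.trans (Function.Embedding.subtype _), fun c γ hγβ hγ => not_lt.mp fun hlt => ?_⟩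
  exact (ι c).2 ⟨γ, hγβ, hγ, hlt⟩

end BlockDistances

section HausdorffDimensionBadAll

lemma dist_le_pow_of_coeff_eq {n b : ℕ} {θ θ' : Fin n → FF K}
    (h : ∀ i, ∀ k ≤ (b : ℤ), (toL (θ i)).coeff k = (toL (θ' i)).coeff k) :
    dist θ θ' ≤ (Fintype.card K : ℝ)⁻¹ ^ b := by
  refine (dist_pi_le_iff (by positivity)).mpr fun i => ?_
  rw [inv_pow, ← zpow_natCast, ← zpow_neg]
  refine fnorm_le_zpow_iff.mpr fun k hk => ?_
  rw [toL_sub, HahnSeries.coeff_sub, h i k hk.le, sub_self]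

lemma dimH_unitPolydisc_le (n : ℕ) :
    dimH {θ : Fin n → FF K | ∀ i, fnorm (θ i) < 1} ≤ n := by
  set q : ℝ := (Fintype.card K : ℝ) with hq
  have hq0 : 0 < q := zero_lt_one.trans one_lt_q
  have hr : Tendsto (fun b : ℕ => ENNReal.ofReal (q⁻¹ ^ b)) atTop (nhds 0) :=
    ENNReal.ofReal_zero ▸ ENNReal.tendsto_ofReal
      (tendsto_pow_atTop_nhds_zero_of_lt_one (by positivity) (inv_lt_one_of_one_lt₀ one_lt_q))
  have hcard (b : ℕ) : (Fintype.card (Fin n → Fin b → K) : ℝ≥0∞) *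
      ENNReal.ofReal (q⁻¹ ^ b) ^ ((n : ℝ≥0) : ℝ) ≤ (1 : ℝ≥0) := by
    have hcast : (Fintype.card (Fin n → Fin b → K) : ℝ≥0∞) = ENNReal.ofReal ((q ^ b) ^ n) := by
      rw [hq, ← Nat.cast_pow, ← Nat.cast_pow, ENNReal.ofReal_natCast]
      simp
    rw [NNReal.coe_natCast, ENNReal.rpow_natCast, hcast, ← ENNReal.ofReal_pow (by positivity),
      ← ENNReal.ofReal_mul (by positivity), ← mul_pow, ← mul_pow, mul_inv_cancel₀ hq0.ne', one_pow,
      one_pow, ENNReal.ofReal_one, ENNReal.coe_one]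
  let cyl (b : ℕ) (c : Fin n → Fin b → K) : Set (Fin n → FF K) :=
    {θ | (∀ i, fnorm (θ i) < 1) ∧ ∀ i (s : Fin b), (toL (θ i)).coeff (s + 1) = c i s}
  refine dimH_le_of_cover hr (t := cyl) (fun b c => Metric.ediam_le ?_) (fun b θ hθ => ?_) hcard
  · rintro θ ⟨hθ, hc⟩ θ' ⟨hθ', hc'⟩
    rw [edist_dist]
    refine ENNReal.ofReal_le_ofReal (dist_le_pow_of_coeff_eq fun i k hk => ?_)
    rcases le_or_gt k 0 with hk0 | hk0
    · rw [fnorm_lt_one_iff.mp (hθ i) k hk0, fnorm_lt_one_iff.mp (hθ' i) k hk0]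
    · obtain ⟨s, rfl⟩ : ∃ s : ℕ, k = s + 1 := ⟨(k - 1).toNat, by omega⟩
      exact (hc i ⟨s, by omega⟩).trans (hc' i ⟨s, by omega⟩).symm
  · exact Set.mem_iUnion.mpr ⟨fun i s => (toL (θ i)).coeff (s + 1), hθ, fun _ _ => rfl⟩

variable {m n : ℕ}

lemma BadAll_subset_unitPolydisc (A : Matrix (Fin n) (Fin m) (FF K)) :
    BadAll A ⊆ {θ | ∀ i, fnorm (θ i) < 1} :=
  Set.iUnion₂_subset fun _ _ _ hθ => hθ.1

lemma exists_separated_tree_in_BadAll (hn : 0 < n) (A : Matrix (Fin n) (Fin m) (FF K)) {N : ℕ}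
    (hN : 0 < N) :
    ∃ T : (ℕ → Fin (Fintype.card K ^ (n * N - 1))) → Fin n → FF K, (∀ d, T d ∈ BadAll A) ∧
      ∀ d d' (b : ℕ), (∀ k < b, d k = d' k) → d b ≠ d' b →
        (Fintype.card K : ℝ) ^ (-((b + 1) * N : ℤ)) ≤ dist (T d) (T d') := by
  have : NeZero N := ⟨hN.ne'⟩
  choose W hW hmin using exists_Mfun_min_shell hn hN A
  obtain ⟨Φ, hgood, hsep⟩ := exists_branching fun b =>
    exists_embedding_le_sdist_blockPoint hn (hW b)
  refine ⟨fun d => blockPoint (Φ d), fun d => ?_, fun d d' b hprefix hne =>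
    le_dist_blockPoint (hsep d d' b hprefix hne)⟩
  refine Set.mem_iUnion₂.mpr ⟨_, Real.rpow_pos_of_pos (zero_lt_one.trans one_lt_q) _,
    mem_Bad_of_Mfun_min_shell hn hN hW hmin (L := 2 * N) (fun i => fnorm_ofBlocks_lt_one _) ?_⟩
  exact_mod_cast hgood d

lemma zpow_neg_rpow_sub_inv {q : ℝ} (hq : 0 < q) {n N : ℕ} (hnN : 0 < n * N) (b : ℕ) :
    (q ^ (-((b + 1) * N : ℤ))) ^ (n - (N : ℝ)⁻¹) = ((q ^ (n * N - 1)) ^ (b + 1))⁻¹ := by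
  have hN : (N : ℝ) ≠ 0 := Nat.cast_ne_zero.mpr (Nat.pos_of_mul_pos_left hnN).ne'
  rw [← Real.rpow_intCast, ← Real.rpow_mul hq.le, ← pow_mul, ← Real.rpow_natCast,
    ← Real.rpow_neg hq.le]
  congr 1
  push_cast [Nat.cast_sub (Nat.one_le_iff_ne_zero.mpr hnN.ne')]
  field_simp

lemma sub_inv_le_dimH_BadAll (hn : 0 < n) (A : Matrix (Fin n) (Fin m) (FF K)) {N : ℕ}
    (hN : 2 ≤ N) : (n : ℝ≥0∞) - (N : ℝ≥0∞)⁻¹ ≤ dimH (BadAll A) := by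
  obtain ⟨T, hbad, hsep⟩ := exists_separated_tree_in_BadAll hn A (zero_lt_two.trans_le hN)
  set q : ℝ := (Fintype.card K : ℝ)
  have hq0 : 0 < q := zero_lt_one.trans one_lt_q
  have hN0 : (N : ℝ≥0) ≠ 0 := Nat.cast_ne_zero.mpr (by omega)
  have hnN : 1 < n * N := one_lt_mul_of_le_of_lt hn hN
  have hinv : (N : ℝ≥0)⁻¹ ≤ n := calc
    (N : ℝ≥0)⁻¹ ≤ 1 := inv_le_one_of_one_le₀ (Nat.one_le_cast.mpr (by omega))
    _ ≤ n := Nat.one_le_cast.mpr hn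
  set s : ℝ≥0 := n - (N : ℝ≥0)⁻¹ with hs
  have hs_coe : (s : ℝ) = n - (N : ℝ)⁻¹ := by
    rw [hs, NNReal.coe_sub hinv, NNReal.coe_inv, NNReal.coe_natCast, NNReal.coe_natCast]
  have hdim : (s : ℝ≥0∞) ≤ dimH (Set.range T) := by
    refine le_dimH_range (C := (Fintype.card K ^ (n * N - 1) : ℕ))
      (Nat.one_lt_pow (by omega) Fintype.one_lt_card) fun d d' b hprefix hne => ?_
    push_cast
    calc ((q ^ (n * N - 1)) ^ b)⁻¹ = q ^ (n * N - 1) * ((q ^ (n * N - 1)) ^ (b + 1))⁻¹ := by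
          rw [pow_succ' _ b, mul_inv, mul_inv_cancel_left₀ (by positivity)]
      _ ≤ q ^ (n * N - 1) * dist (T d) (T d') ^ (s : ℝ) := by
          rw [← zpow_neg_rpow_sub_inv hq0 (by omega), ← hs_coe]
          gcongr
          exact hsep d d' b hprefix hne
  calc (n : ℝ≥0∞) - (N : ℝ≥0∞)⁻¹ = s := by
        rw [hs, ENNReal.coe_sub, ENNReal.coe_inv hN0, ENNReal.coe_natCast, ENNReal.coe_natCast]
    _ ≤ dimH (Set.range T) := hdim
    _ ≤ dimH (BadAll A) := dimH_mono (Set.range_subset_iff.mpr hbad)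

end HausdorffDimensionBadAll

end FPSDA

theorem dimH_BadAll_general {K : Type*} [Field K] [Fintype K] {m n : ℕ} (hn : 0 < n)
    (A : Matrix (Fin n) (Fin m) (FF K)) : dimH (BadAll A) = n := by
  refine le_antisymm ((dimH_mono (BadAll_subset_unitPolydisc A)).trans (dimH_unitPolydisc_le n)) ?_
  have hlim : Tendsto (fun N : ℕ => (n : ℝ≥0∞) - (N : ℝ≥0∞)⁻¹) atTop (nhds n) := by
    simpa only [tsub_zero] using ENNReal.Tendsto.sub tendsto_const_nhds
      ENNReal.tendsto_inv_nat_nhds_zero (.inl (ENNReal.natCast_ne_top n))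
  exact le_of_tendsto hlim <| (eventually_ge_atTop 2).mono fun N hN =>
    sub_inv_le_dimH_BadAll hn A hN

/-- For any non-degenerate matrix `A ∈ M_{n,m}(𝔽_q((z⁻¹)))`, the set
`Bad(A) = ⋃_{ε>0} Bad^ε(A)` has Hausdorff dimension `n`. -/
theorem dimH_BadAll {K : Type*} [Field K] [Fintype K] {m n : ℕ}
    (hm : 0 < m) (hn : 0 < n)
    (A : Matrix (Fin n) (Fin m) (FF K)) (hA : Nondegenerate A) :
    dimH (BadAll A) = n :=
  dimH_BadAll_general hn A
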